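/- Let m ≥ 2, let P be an (m−1)×(m−1) real signed permutation matrix, let σ₀ ∈ {1, −1}, and let A be the m×m matrix with entry σ₀ in position (1, m), entries A_{i+1,j} = P_{ij} for 1 ≤ i, j ≤ m−1, and all other entries zero. Suppose that every complex eigenvalue of P has nonpositive real part and that all complex eigenvalues of A are real. Then P = P*, i.e., the entries of P (1-indexed) are: p_{ij} = 0 if i + j ≠ m; and for i + j = m, p_{ij} = σ₀(−1)^{j−1} if j ≤ m/2 and p_{ij} = σ₀(−1)^{m−j} if j > m/2. -/

import Mathlib

/-- A real signed permutation matrix: all entries in `{-1, 0, 1}`, with exactly one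
nonzero entry in each row and each column. -/
def IsSignedPerm {n : ℕ} (P : Matrix (Fin n) (Fin n) ℝ) : Prop :=
  (∀ i j, P i j = -1 ∨ P i j = 0 ∨ P i j = 1) ∧
  (∀ i, ∃! j, P i j ≠ 0) ∧ (∀ j, ∃! i, P i j ≠ 0)

/-- The m×m matrix with entry `s` in (1-indexed) position (1, m), the matrix `P` in
positions `A_{i+1,j} = P_{ij}` for `1 ≤ i, j ≤ m-1`, and all other entries zero. -/
noncomputable def embedA (m : ℕ) (s : ℝ) (P : Matrix (Fin (m-1)) (Fin (m-1)) ℝ) :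
    Matrix (Fin m) (Fin m) ℝ := fun i j =>
  if hi : (i : ℕ) = 0 then (if (j : ℕ) = m - 1 then s else 0)
  else if hj : (j : ℕ) < m - 1 then
    P ⟨(i : ℕ) - 1, by have := i.isLt; omega⟩ ⟨(j : ℕ), hj⟩
  else 0

/-- The (m-1)×(m-1) matrix `P*` with (1-indexed) entries `p_{ij} = 0` if `i + j ≠ m`,
and for `i + j = m`: `p_{ij} = σ₀ (-1)^(j-1)` if `j ≤ m/2`, `p_{ij} = σ₀ (-1)^(m-j)`
if `j > m/2`. -/
noncomputable def Pstar (m : ℕ) (σ₀ : ℝ) : Matrix (Fin (m-1)) (Fin (m-1)) ℝ := fun i j =>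
  if (i : ℕ) + (j : ℕ) + 2 = m then
    (if 2 * ((j : ℕ) + 1) ≤ m then σ₀ * (-1) ^ (j : ℕ)
     else σ₀ * (-1) ^ (m - ((j : ℕ) + 1)))
  else 0

/-!
Signed permutation matrices are orthogonal, hence normal, so their spectra control their entries.
The matrix `A` is again a signed permutation matrix; having real spectrum, it is symmetric.
As the spectrum of `P` lies in `re z ≤ 0`, the matrix `-(P + Pᵀ)` is positive semidefinite; a zero
diagonal entry of such a matrix annihilates its row, so `P` is skew-symmetric off the diagonal.
Symmetry of `A` forces the bottom left entry of `P` to be `σ₀` and equates each antidiagonal entry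
of `P` with the transpose of the previous one; alternating this with the skew-symmetry of `P`
determines the whole antidiagonal. Its entries are nonzero, so all other entries of `P` vanish.
-/

open Matrix ComplexStarModule

section CStarAlgebra

variable {A : Type*} [CStarAlgebra A] {a : A}

theorem isSelfAdjoint_of_spectrum_im_eq_zero (ha : IsStarNormal a)
    (h : ∀ z ∈ spectrum ℂ a, z.im = 0) : IsSelfAdjoint a :=
  isSelfAdjoint_iff_isStarNormal_and_quasispectrumRestricts.mpr
    ⟨ha, SpectrumRestricts.real_iff.mpr fun z hz ↦ Complex.ext rfl (by simp [h z hz])⟩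

open scoped ComplexOrder in
theorem realPart_nonpos_of_spectrum_re_nonpos [PartialOrder A] [StarOrderedRing A]
    (ha : IsStarNormal a) (h : ∀ z ∈ spectrum ℂ a, z.re ≤ 0) : (ℜ a : A) ≤ 0 := by
  rw [← cfc_re_id a]
  exact cfc_nonpos _ a fun z hz ↦ by exact_mod_cast h z hz

end CStarAlgebra

section Matrix

variable {n : Type*}

open scoped ComplexOrder in
theorem apply_eq_zero_of_posSemidef_of_diag_eq_zero {𝕜 : Type*} [RCLike 𝕜] {M : Matrix n n 𝕜}
    (hM : M.PosSemidef) {i : n} (hi : M i i = 0) (j : n) : M i j = 0 := by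
  have hdet : 0 ≤ M i i * M j j - M i j * M j i := by
    have := (hM.submatrix ![i, j]).det_nonneg
    rwa [det_fin_two] at this
  have hnorm : M i j * M j i = (‖M i j‖ : 𝕜) ^ 2 := by
    rw [← hM.isHermitian.apply j i, RCLike.star_def, RCLike.mul_conj]
  rw [hi, zero_mul, zero_sub, hnorm] at hdet
  norm_cast at hdet
  simpa using le_antisymm (neg_nonneg.mp hdet) (sq_nonneg _)

theorem star_map_ofReal (Q : Matrix n n ℝ) :
    star (Q.map Complex.ofReal) = (star Q).map Complex.ofReal := by
  ext
  simp

theorem realPart_map_ofReal_apply (Q : Matrix n n ℝ) (i j : n) :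
    (ℜ (Q.map Complex.ofReal) : Matrix n n ℂ) i j = ((Q i j + Q j i) / 2 : ℝ) := by
  simp [realPart_apply_coe, star_map_ofReal, div_eq_inv_mul, mul_add]

variable [Fintype n] {Q : Matrix n n ℝ}

theorem isStarNormal_map_ofReal (hQ : IsStarNormal Q) :
    IsStarNormal (Q.map Complex.ofReal) where
  star_comm_self := by
    have hmul (M N : Matrix n n ℝ) :
        (M * N).map Complex.ofReal = M.map Complex.ofReal * N.map Complex.ofReal :=
      Matrix.map_mul (f := Complex.ofRealHom)
    rw [commute_iff_eq, star_map_ofReal, ← hmul, ← hmul, hQ.star_comm_self.eq]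

variable [DecidableEq n]

open scoped Matrix.Norms.L2Operator

theorem isSymm_of_spectrum_im_eq_zero (hQ : IsStarNormal Q)
    (h : ∀ z ∈ spectrum ℂ (Q.map Complex.ofReal), z.im = 0) : Q.IsSymm := by
  have hsa := isSelfAdjoint_of_spectrum_im_eq_zero (isStarNormal_map_ofReal hQ) h
  rw [IsSelfAdjoint, star_map_ofReal] at hsa
  exact Matrix.map_injective Complex.ofReal_injective hsa

open scoped MatrixOrder ComplexOrder in
theorem apply_eq_neg_apply_of_diag_eq_zero (hQ : IsStarNormal Q)
    (h : ∀ z ∈ spectrum ℂ (Q.map Complex.ofReal), z.re ≤ 0) {i : n} (hi : Q i i = 0) (j : n) :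
    Q i j = -Q j i := by
  have hpsd : (-(ℜ (Q.map Complex.ofReal) : Matrix n n ℂ)).PosSemidef :=
    (neg_nonneg.mpr <| realPart_nonpos_of_spectrum_re_nonpos
      (isStarNormal_map_ofReal hQ) h).posSemidef
  have hdiag : (-(ℜ (Q.map Complex.ofReal) : Matrix n n ℂ)) i i = 0 := by
    rw [neg_apply, realPart_map_ofReal_apply, hi]
    simp
  have hzero := apply_eq_zero_of_posSemidef_of_diag_eq_zero hpsd hdiag j
  rw [neg_apply, realPart_map_ofReal_apply, neg_eq_zero, Complex.ofReal_eq_zero] at hzero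
  linarith

end Matrix

namespace IsSignedPerm

variable {n : ℕ} {P : Matrix (Fin n) (Fin n) ℝ}

theorem apply_eq_zero_of_ne (hP : IsSignedPerm P) {i j k : Fin n} (hij : P i j ≠ 0)
    (hk : k ≠ j) : P i k = 0 :=
  of_not_not fun hik ↦ hk ((hP.2.1 i).unique hik hij)

theorem apply_eq_zero_of_ne_left (hP : IsSignedPerm P) {i j k : Fin n} (hij : P i j ≠ 0)
    (hk : k ≠ i) : P k j = 0 :=
  of_not_not fun hkj ↦ hk ((hP.2.2 j).unique hkj hij)

theorem mul_transpose_self (hP : IsSignedPerm P) : P * Pᵀ = 1 := by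
  ext i k
  obtain ⟨j, hij, -⟩ := hP.2.1 i
  have hsum : (P * Pᵀ) i k = P i j * P k j := by
    rw [mul_apply]
    exact Finset.sum_eq_single j (fun l _ hl ↦ by rw [hP.apply_eq_zero_of_ne hij hl, zero_mul])
      (by simp)
  rw [hsum]
  rcases eq_or_ne k i with rfl | hki
  · rcases hP.1 k j with h | h | h <;> simp_all
  · rw [hP.apply_eq_zero_of_ne_left hij hki, mul_zero, one_apply_ne hki.symm]

theorem isStarNormal (hP : IsSignedPerm P) : IsStarNormal P :=
  isStarNormal_of_mem_unitary (mem_unitaryGroup_iff.mpr hP.mul_transpose_self)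

theorem apply_eq_neg_apply_of_spectrum_re_nonpos (hP : IsSignedPerm P)
    (h : ∀ z ∈ spectrum ℂ (P.map Complex.ofReal), z.re ≤ 0) {i j : Fin n} (hij : i ≠ j) :
    P i j = -P j i := by
  by_cases hi : P i i = 0
  · exact apply_eq_neg_apply_of_diag_eq_zero hP.isStarNormal h hi j
  · rw [hP.apply_eq_zero_of_ne hi hij.symm, hP.apply_eq_zero_of_ne_left hi hij.symm, neg_zero]

theorem eq_of_antidiagonal_eq (hP : IsSignedPerm P) {Q : Matrix (Fin n) (Fin n) ℝ}
    (h_ne : ∀ k : Fin n, Q k.rev k ≠ 0) (h_off : ∀ i j : Fin n, i ≠ j.rev → Q i j = 0)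
    (h : ∀ k : Fin n, P k.rev k = Q k.rev k) : P = Q := by
  ext i j
  rcases eq_or_ne i j.rev with rfl | hij
  · exact h j
  · rw [h_off i j hij, hP.apply_eq_zero_of_ne_left (h j ▸ h_ne j) hij]

end IsSignedPerm

section embedA

variable {n : ℕ} {s : ℝ}

section Apply

variable (s : ℝ) (P : Matrix (Fin n) (Fin n) ℝ)

@[simp]
theorem embedA_zero_last : embedA (n + 1) s P 0 (Fin.last n) = s := by
  simp [embedA]

@[simp]
theorem embedA_zero_castSucc (j : Fin n) : embedA (n + 1) s P 0 j.castSucc = 0 := by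
  simp [embedA, j.isLt.ne]

@[simp]
theorem embedA_succ_last (i : Fin n) : embedA (n + 1) s P i.succ (Fin.last n) = 0 := by
  simp [embedA]

@[simp]
theorem embedA_succ_castSucc (i j : Fin n) :
    embedA (n + 1) s P i.succ j.castSucc = P i j := by
  simp [embedA]

end Apply

theorem isSignedPerm_embedA {P : Matrix (Fin n) (Fin n) ℝ} (hP : IsSignedPerm P)
    (hs : s = 1 ∨ s = -1) : IsSignedPerm (embedA (n + 1) s P) := by
  have hs₀ : s ≠ 0 := by rcases hs with rfl | rfl <;> norm_num
  refine ⟨fun i j ↦ ?_, fun i ↦ ?_, fun j ↦ ?_⟩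
  · have hs' : s = -1 ∨ s = 0 ∨ s = 1 := by tauto
    cases i using Fin.cases <;> cases j using Fin.lastCases <;> simp [hP.1, hs']
  · cases i using Fin.cases with
    | zero => exact ⟨Fin.last n, by simp [hs₀], fun j ↦ by cases j using Fin.lastCases <;> simp⟩
    | succ i =>
      obtain ⟨k, hk, huniq⟩ := hP.2.1 i
      refine ⟨k.castSucc, by simpa, fun j ↦ ?_⟩
      cases j using Fin.lastCases with
      | last => simp
      | cast j => simpa using huniq j
  · cases j using Fin.lastCases with
    | last => exact ⟨0, by simp [hs₀], fun i ↦ by cases i using Fin.cases <;> simp⟩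
    | cast j =>
      obtain ⟨k, hk, huniq⟩ := hP.2.2 j
      refine ⟨k.succ, by simpa, fun i ↦ ?_⟩
      cases i using Fin.cases with
      | zero => simp
      | succ i => simpa using huniq i

variable {P : Matrix (Fin (n + 1)) (Fin (n + 1)) ℝ}

theorem apply_last_zero_of_isSymm_embedA (h : (embedA (n + 2) s P).IsSymm) :
    P (Fin.last n) 0 = s := by
  calc P (Fin.last n) 0
      = embedA (n + 2) s P (Fin.last n).succ (Fin.castSucc 0) := (embedA_succ_castSucc ..).symm
    _ = embedA (n + 2) s P 0 (Fin.last (n + 1)) := h.apply _ _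
    _ = s := embedA_zero_last ..

theorem apply_castSucc_succ_of_isSymm_embedA (h : (embedA (n + 2) s P).IsSymm) (i j : Fin n) :
    P i.castSucc j.succ = P j.castSucc i.succ := by
  calc P i.castSucc j.succ
      = embedA (n + 2) s P i.castSucc.succ j.succ.castSucc := (embedA_succ_castSucc ..).symm
    _ = embedA (n + 2) s P j.castSucc.succ i.succ.castSucc := h.apply _ _
    _ = P j.castSucc i.succ := embedA_succ_castSucc ..

theorem apply_rev_of_isSymm_embedA (hA : (embedA (n + 2) s P).IsSymm)
    (hP : ∀ i j, i ≠ j → P i j = -P j i) (k : Fin (n + 1)) (hk : 2 * (k + 1 : ℕ) ≤ n + 2) :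
    P k.rev k = s * (-1) ^ (k : ℕ) := by
  induction k using Fin.induction with
  | zero => simpa using apply_last_zero_of_isSymm_embedA hA
  | succ k ih =>
    rw [Fin.val_succ] at hk
    have hne : k.castSucc ≠ k.castSucc.rev := by
      rw [Ne, Fin.ext_iff, Fin.val_rev, Fin.val_castSucc]
      omega
    calc P k.succ.rev k.succ
        = P k.castSucc k.castSucc.rev := by
          rw [Fin.rev_succ, apply_castSucc_succ_of_isSymm_embedA hA, Fin.rev_castSucc]
      _ = -P k.castSucc.rev k.castSucc := hP _ _ hne
      _ = s * (-1) ^ (k.succ : ℕ) := by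
          rw [ih (by rw [Fin.val_castSucc]; omega), Fin.val_castSucc, Fin.val_succ]
          ring

end embedA

section Pstar

variable {n : ℕ} {s : ℝ}

theorem Pstar_apply_rev (k : Fin n) :
    Pstar (n + 1) s k.rev k =
      if 2 * (k + 1 : ℕ) ≤ n + 1 then s * (-1) ^ (k : ℕ) else s * (-1) ^ (k.rev + 1 : ℕ) := by
  have hsum : (k.rev : ℕ) + k + 2 = n + 1 := by rw [Fin.val_rev]; omega
  have hexp : n + 1 - (k + 1 : ℕ) = k.rev + 1 := by omega
  rw [Pstar, if_pos hsum, hexp]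

theorem Pstar_apply_of_ne_rev {i j : Fin n} (hij : i ≠ j.rev) :
    Pstar (n + 1) s i j = 0 := by
  refine if_neg fun hsum ↦ hij (Fin.ext ?_)
  rw [Fin.val_rev]
  omega

theorem Pstar_apply_rev_ne_zero (hs : s ≠ 0) (k : Fin n) : Pstar (n + 1) s k.rev k ≠ 0 := by
  rw [Pstar_apply_rev]
  split_ifs <;> simp [hs]

theorem apply_rev_eq_Pstar_apply {P : Matrix (Fin (n + 1)) (Fin (n + 1)) ℝ}
    (hA : (embedA (n + 2) s P).IsSymm) (hP : ∀ i j, i ≠ j → P i j = -P j i)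
    (k : Fin (n + 1)) : P k.rev k = Pstar (n + 2) s k.rev k := by
  rw [Pstar_apply_rev]
  split_ifs with hk
  · exact apply_rev_of_isSymm_embedA hA hP k hk
  · have hne : k.rev ≠ k := by rw [Ne, Fin.ext_iff, Fin.val_rev]; omega
    have hrev := apply_rev_of_isSymm_embedA hA hP k.rev (by rw [Fin.val_rev]; omega)
    rw [Fin.rev_rev] at hrev
    rw [hP _ _ hne, hrev, pow_succ]
    ring

end Pstar

/-- If every complex eigenvalue of the signed permutation matrix `P`
has nonpositive real part and all complex eigenvalues of `A` are real, then `P = P*`. -/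
theorem stmt5 (m : ℕ) (hm : 2 ≤ m) (P : Matrix (Fin (m-1)) (Fin (m-1)) ℝ)
    (hP : IsSignedPerm P) (σ₀ : ℝ) (hσ : σ₀ = 1 ∨ σ₀ = -1)
    (hPspec : ∀ z ∈ spectrum ℂ (P.map Complex.ofReal), z.re ≤ 0)
    (hreal : ∀ z ∈ spectrum ℂ ((embedA m σ₀ P).map Complex.ofReal), z.im = 0) :
    P = Pstar m σ₀ := by
  obtain ⟨n, rfl⟩ := Nat.exists_eq_add_of_le' hm
  have hσ₀ : σ₀ ≠ 0 := by rcases hσ with rfl | rfl <;> norm_num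
  have hA : (embedA (n + 2) σ₀ P).IsSymm :=
    isSymm_of_spectrum_im_eq_zero (isSignedPerm_embedA hP hσ).isStarNormal hreal
  have hskew : ∀ i j, i ≠ j → P i j = -P j i := fun _ _ ↦
    hP.apply_eq_neg_apply_of_spectrum_re_nonpos hPspec
  exact hP.eq_of_antidiagonal_eq (Pstar_apply_rev_ne_zero hσ₀) (fun _ _ ↦ Pstar_apply_of_ne_rev)
    (apply_rev_eq_Pstar_apply hA hskew)
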